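/- Let $w \in F_2$ be cyclically reduced of length at least 1, and suppose that as a cyclic word $w$ contains a block $a^m$ with $|m| \ge |w'|+2$ and a block $b^k$ with $|k| \ge |w'|+2$ for some word $w'$. Then $w$ is not an automorphic image of $w'$. -/

import Mathlib

open FreeGroup List

abbrev F2 := FreeGroup (Fin 2)

/-- The generator `a` of `F₂`. -/
def ga : F2 := FreeGroup.of 0

/-- The generator `b` of `F₂`. -/
def gb : F2 := FreeGroup.of 1

/-- `v` contains a block `x^{±k}`: `k` consecutive occurrences of the letter `x`
with the same sign, as a contiguous subword of the reduced word of `v`.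
Thus "every `x`-exponent of `v` has absolute value `≤ n`" is `¬ HasBlock x (n+1) v`. -/
def HasBlock (x : Fin 2) (k : ℕ) (v : F2) : Prop :=
  (List.replicate k (x, true)) <:+: v.toWord ∨ (List.replicate k (x, false)) <:+: v.toWord

/-- A reduced word is cyclically reduced if its last letter is not
the inverse of its first letter. -/
def CyclicallyReduced (l : List (Fin 2 × Bool)) : Prop :=
  ∀ p ∈ l.head?, ∀ q ∈ l.getLast?, q ≠ (p.1, !p.2)

/-- `(x, y)` is a basis of `F₂`: the image of `(a, b)` under an automorphism. -/
def IsBasis (x y : F2) : Prop := ∃ φ : F2 ≃* F2, φ ga = x ∧ φ gb = y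

section CommonPrefix

variable {α : Type*} [DecidableEq α]

/-- The length of the longest common prefix of two lists. -/
def commonPrefixLength : List α → List α → ℕ
  | a :: l, b :: m => if a = b then commonPrefixLength l m + 1 else 0
  | _, _ => 0

theorem commonPrefixLength_comm (l m : List α) :
    commonPrefixLength l m = commonPrefixLength m l := by
  induction l generalizing m with
  | nil => cases m <;> rfl
  | cons a l ih => cases m <;> simp [commonPrefixLength, ih, eq_comm]

theorem min_commonPrefixLength_le (l m n : List α) :
    min (commonPrefixLength l m) (commonPrefixLength m n) ≤ commonPrefixLength l n := by
  induction l generalizing m n with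
  | nil => cases m <;> simp [commonPrefixLength]
  | cons a l ih =>
    cases m with
    | nil => simp [commonPrefixLength]
    | cons b m =>
      cases n with
      | nil => simp [commonPrefixLength]
      | cons c n =>
        have := ih m n
        simp only [commonPrefixLength]
        split_ifs <;> first | omega | simp_all

theorem exists_commonPrefix (l m : List α) :
    ∃ p s t, l = p ++ s ∧ m = p ++ t ∧ p.length = commonPrefixLength l m ∧
      ∀ a ∈ s.head?, ∀ b ∈ t.head?, a ≠ b := by
  induction l generalizing m with
  | nil => exact ⟨[], [], m, by simp [commonPrefixLength]⟩
  | cons a l ih =>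
    cases m with
    | nil => exact ⟨[], a :: l, [], by simp [commonPrefixLength]⟩
    | cons b m =>
      by_cases h : a = b
      · obtain ⟨p, s, t, rfl, rfl, hp, hst⟩ := ih m
        exact ⟨a :: p, s, t, by simp, by simp [h], by simp [commonPrefixLength, h, hp], hst⟩
      · exact ⟨[], a :: l, b :: m, by simp [commonPrefixLength, h]⟩

end CommonPrefix

namespace FreeGroup

variable {α : Type*}

theorem IsReduced.invRev {l : List (α × Bool)} (h : IsReduced l) :
    IsReduced (FreeGroup.invRev l) := by
  classical
  rw [isReduced_iff_reduce_eq, reduce_invRev, h.reduce_eq]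

variable [DecidableEq α]

/-- The length of the longest common prefix of the reduced words of `x` and `y`. -/
def gromovProd (x y : FreeGroup α) : ℕ := commonPrefixLength x.toWord y.toWord

theorem gromovProd_comm (x y : FreeGroup α) : gromovProd x y = gromovProd y x :=
  commonPrefixLength_comm _ _

theorem min_gromovProd_le (x y z : FreeGroup α) :
    min (gromovProd x y) (gromovProd y z) ≤ gromovProd x z :=
  min_commonPrefixLength_le _ _ _

theorem exists_toWord_inv_mul (x y : FreeGroup α) :
    ∃ p s t, x.toWord = p ++ s ∧ y.toWord = p ++ t ∧ p.length = gromovProd x y ∧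
      (x⁻¹ * y).toWord = invRev s ++ t := by
  obtain ⟨p, s, t, hx, hy, hp, hst⟩ := exists_commonPrefix x.toWord y.toWord
  refine ⟨p, s, t, hx, hy, hp, ?_⟩
  have hs : IsReduced s := isReduced_toWord.infix (hx ▸ (List.suffix_append p s).isInfix)
  have ht : IsReduced t := isReduced_toWord.infix (hy ▸ (List.suffix_append p t).isInfix)
  have hred : IsReduced (invRev s ++ t) := by
    refine List.isChain_append.2 ⟨hs.invRev, ht, ?_⟩
    intro a ha b hb
    have hlast : (invRev s).getLast? = s.head?.map fun a => (a.1, !a.2) := by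
      simp [invRev]
    rw [hlast] at ha
    obtain ⟨c, hc, rfl⟩ := Option.mem_map.1 ha
    have := hst c hc b hb
    rcases c with ⟨c, e⟩
    rcases b with ⟨b, e'⟩
    cases e <;> cases e' <;> simp_all
  have hxy : x⁻¹ * y = mk (invRev s ++ t) := by
    rw [← mk_toWord (x := x), ← mk_toWord (x := y), hx, hy, ← mul_mk, ← mul_mk, ← mul_mk,
      ← inv_mk]
    group
  rw [hxy, toWord_mk, hred.reduce_eq]

theorem norm_inv_mul (x y : FreeGroup α) :
    norm (x⁻¹ * y) + 2 * gromovProd x y = norm x + norm y := by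
  obtain ⟨p, s, t, hx, hy, hp, h⟩ := exists_toWord_inv_mul x y
  simp only [norm, hx, hy, h, ← hp, List.length_append, invRev_length]
  omega

theorem norm_mul (x y : FreeGroup α) :
    norm (x * y) + 2 * gromovProd x⁻¹ y = norm x + norm y := by
  simpa using norm_inv_mul x⁻¹ y

theorem norm_lt_norm_mul_self {x : FreeGroup α} (hx : x ≠ 1) : norm x < norm (x * x) := by
  have h1 := reduceCyclically.reduce_flatten_replicate_succ (isReduced_toWord (x := x)) 1
  have h2 := reduceCyclically.conj_conjugator_reduceCyclically x.toWord
  have h3 : (x * x).toWord = reduce (List.replicate (1 + 1) x.toWord).flatten := by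
    rw [← pow_two, toWord_pow]
  have hne : reduceCyclically x.toWord ≠ [] := by
    intro h
    apply hx
    rw [h] at h2
    rw [← mk_toWord (x := x), ← h2, List.append_nil, ← mul_mk, ← inv_mk, mul_inv_cancel]
  have hpos := List.length_pos_iff.2 hne
  rw [norm, norm, h3, h1]
  conv_lhs => rw [← h2]
  simp [List.replicate_succ]
  omega

end FreeGroup

section RepeatCount

variable {α : Type*} [DecidableEq α]

/-- The number of positions at which a letter `i ^ ±1` is followed by an equal letter. -/
def repeatCount (i : α) : List (α × Bool) → ℕ
  | a :: b :: l => (if a = b ∧ a.1 = i then 1 else 0) + repeatCount i (b :: l)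
  | _ => 0

theorem repeatCount_cons_le (i : α) (a : α × Bool) (l : List (α × Bool)) :
    repeatCount i l ≤ repeatCount i (a :: l) ∧ repeatCount i (a :: l) ≤ repeatCount i l + 1 := by
  cases l with
  | nil => simp [repeatCount]
  | cons b l =>
    rw [repeatCount]
    split_ifs <;> omega

theorem repeatCount_append (i : α) (l m : List (α × Bool)) :
    repeatCount i l + repeatCount i m ≤ repeatCount i (l ++ m) ∧
      repeatCount i (l ++ m) ≤ repeatCount i l + repeatCount i m + 1 := by
  induction l with
  | nil => simp [repeatCount]
  | cons a l ih =>
    cases l with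
    | nil => simpa [repeatCount, add_comm] using repeatCount_cons_le i a m
    | cons b l =>
      simp only [List.cons_append, repeatCount] at ih ⊢
      omega

theorem repeatCount_append_pair (i : α) (l : List (α × Bool)) (a b : α × Bool) :
    repeatCount i (l ++ [a, b]) =
      repeatCount i (l ++ [a]) + if a = b ∧ a.1 = i then 1 else 0 := by
  induction l with
  | nil => simp [repeatCount]
  | cons c l ih =>
    cases l with
    | nil => simp [repeatCount]
    | cons d l =>
      simp only [List.cons_append, repeatCount] at ih ⊢
      omega

theorem repeatCount_invRev (i : α) (l : List (α × Bool)) :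
    repeatCount i (invRev l) = repeatCount i l := by
  induction l with
  | nil => rfl
  | cons a l ih =>
    cases l with
    | nil => rfl
    | cons b l =>
      have h : invRev (a :: b :: l) = invRev l ++ [(b.1, !b.2), (a.1, !a.2)] := by
        simp [invRev]
      have h' : invRev (b :: l) = invRev l ++ [(b.1, !b.2)] := by simp [invRev]
      rw [h, repeatCount_append_pair, ← h', ih, repeatCount, add_comm]
      congr 2
      rcases a with ⟨a, e⟩
      rcases b with ⟨b, e'⟩
      simp only [Prod.mk.injEq, Bool.not_inj_iff, eq_iff_iff]
      constructor <;> rintro ⟨⟨rfl, rfl⟩, rfl⟩ <;> simp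

theorem repeatCount_replicate (i : α) (e : Bool) (k : ℕ) :
    repeatCount i (List.replicate (k + 1) (i, e)) = k := by
  induction k with
  | zero => rfl
  | succ k ih =>
    rw [List.replicate_succ] at ih
    rw [List.replicate_succ, List.replicate_succ, repeatCount, ih]
    simp [add_comm]

theorem mul_repeatCount_le (i : α) (l : List (α × Bool)) (n : ℕ) :
    n * repeatCount i l ≤ repeatCount i (List.replicate n l).flatten := by
  induction n with
  | zero => simp
  | succ n ih =>
    rw [List.replicate_succ, List.flatten_cons, add_mul, one_mul]
    have := (repeatCount_append i l (List.replicate n l).flatten).1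
    omega

theorem repeatCount_toWord_inv (i : α) (x : FreeGroup α) :
    repeatCount i x⁻¹.toWord = repeatCount i x.toWord := by
  rw [toWord_inv, repeatCount_invRev]

theorem repeatCount_toWord_mul_le (i : α) (x y : FreeGroup α) :
    repeatCount i (x * y).toWord ≤ repeatCount i x.toWord + repeatCount i y.toWord + 1 := by
  obtain ⟨p, s, t, hx, hy, -, h⟩ := exists_toWord_inv_mul x⁻¹ y
  rw [inv_inv] at h
  rw [← repeatCount_toWord_inv i x, hx, hy, h]
  have h1 := (repeatCount_append i (invRev s) t).2
  have h2 := (repeatCount_append i p s).1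
  have h3 := (repeatCount_append i p t).1
  rw [repeatCount_invRev] at h1
  omega

theorem repeatCount_le_of_infix (i : α) {l m : List (α × Bool)} (h : l <:+: m) :
    repeatCount i l ≤ repeatCount i m := by
  obtain ⟨s, t, rfl⟩ := h
  have h1 := (repeatCount_append i (s ++ l) t).1
  have h2 := (repeatCount_append i s l).1
  omega

/-- The image of a reduced word of length `n` under a homomorphism whose values on letters have
no repeated `i` has at most `n` repetitions of `i`. -/
theorem repeatCount_map_mk_le {β : Type*} (i : α) (θ : FreeGroup β →* FreeGroup α)
    (hθ : ∀ x, repeatCount i (θ (of x)).toWord = 0) (L : List (β × Bool)) :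
    repeatCount i (θ (mk L)).toWord ≤ L.length := by
  induction L with
  | nil => simp [← one_eq_mk, repeatCount]
  | cons a L ih =>
    have h0 : repeatCount i (θ (mk [a])).toWord = 0 := by
      rcases a with ⟨a, _ | _⟩
      · have : mk [(a, false)] = (of a)⁻¹ := rfl
        rw [this, _root_.map_inv, repeatCount_toWord_inv, hθ]
      · exact hθ a
    have h1 : mk (a :: L) = mk [a] * mk L := by simp [mul_mk]
    have h2 := repeatCount_toWord_mul_le i (θ (mk [a])) (θ (mk L))
    rw [h1, _root_.map_mul, List.length_cons]
    omega

/-- A cyclically reduced element conjugate to `θ x` has at most `‖x‖` repetitions of `i`, when the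
values of `θ` on letters have none. -/
theorem repeatCount_le_norm_of_conj {β : Type*} [DecidableEq β] (i : α)
    (θ : FreeGroup β →* FreeGroup α) (hθ : ∀ x, repeatCount i (θ (of x)).toWord = 0)
    (x : FreeGroup β) (c h : FreeGroup α) (hc : IsCyclicallyReduced c.toWord)
    (hx : θ x = h * c * h⁻¹) :
    repeatCount i c.toWord ≤ x.norm := by
  have hpow : ∀ n : ℕ, norm (x ^ n) ≤ n * norm x := by
    intro n
    induction n with
    | zero => simp
    | succ n ih =>
      have := norm_mul_le (x ^ n) x
      rw [pow_succ, add_mul, one_mul]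
      omega
  have key : ∀ n : ℕ, n * repeatCount i c.toWord ≤
      n * norm x + (2 * repeatCount i h.toWord + 2) := by
    intro n
    have h1 : c ^ n = h⁻¹ * θ (x ^ n) * h := by
      rw [map_pow, hx, conj_pow]
      group
    have h2 : (c ^ n).toWord = (List.replicate n c.toWord).flatten := by
      rw [toWord_pow, (hc.flatten_replicate n).isReduced.reduce_eq]
    have h3 := mul_repeatCount_le i c.toWord n
    rw [← h2, h1] at h3
    have h4 := repeatCount_toWord_mul_le i (h⁻¹ * θ (x ^ n)) h
    have h5 := repeatCount_toWord_mul_le i h⁻¹ (θ (x ^ n))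
    have h6 := repeatCount_map_mk_le i θ hθ (x ^ n).toWord
    rw [mk_toWord] at h6
    rw [repeatCount_toWord_inv] at h5
    have h7 : (x ^ n).toWord.length ≤ n * norm x := hpow n
    omega
  by_contra! hlt
  have h1 := key (2 * repeatCount i h.toWord + 3)
  have h2 := Nat.mul_le_mul_left (2 * repeatCount i h.toWord + 3) hlt
  rw [Nat.mul_succ] at h2
  omega

end RepeatCount

namespace FreeGroup

variable {α β : Type*} [DecidableEq α]

/-- Nielsen's conditions on the values of a homomorphism on letters: cancellation between two
consecutive factors affects at most half of each of them, and a factor is never entirely cancelled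
by its two neighbours. -/
structure IsNielsenReduced (f : FreeGroup β →* FreeGroup α) : Prop where
  intro ::
  ne_one : ∀ x, f (mk [x]) ≠ 1
  two_mul_gromovProd_le : ∀ x y, IsReduced [x, y] →
    2 * gromovProd (f (mk [x]))⁻¹ (f (mk [y])) ≤ norm (f (mk [x])) ∧
    2 * gromovProd (f (mk [x]))⁻¹ (f (mk [y])) ≤ norm (f (mk [y]))
  gromovProd_add_lt : ∀ x y z, IsReduced [x, y, z] →
    gromovProd (f (mk [x]))⁻¹ (f (mk [y])) + gromovProd (f (mk [y]))⁻¹ (f (mk [z])) <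
      norm (f (mk [y]))

theorem mk_cons (a : β × Bool) (L : List (β × Bool)) : mk (a :: L) = mk [a] * mk L := by
  simp [mul_mk]

theorem norm_pos_of_ne_one {x : FreeGroup α} (hx : x ≠ 1) : 0 < norm x :=
  Nat.pos_of_ne_zero fun h => hx (norm_eq_zero.1 h)

namespace IsNielsenReduced

variable {f : FreeGroup β →* FreeGroup α}

theorem gromovProd_map_cons (hf : IsNielsenReduced f) (x y : β × Bool) (t : List (β × Bool))
    (h : IsReduced (x :: y :: t)) :
    gromovProd (f (mk [x]))⁻¹ (f (mk (y :: t))) = gromovProd (f (mk [x]))⁻¹ (f (mk [y])) ∧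
      gromovProd (f (mk [x]))⁻¹ (f (mk [y])) + t.length + 1 ≤ norm (f (mk (y :: t))) := by
  induction t generalizing x y with
  | nil =>
    have h1 := (hf.two_mul_gromovProd_le x y h).2
    have h2 := norm_pos_of_ne_one (hf.ne_one y)
    exact ⟨rfl, by simp; omega⟩
  | cons z t ih =>
    have hyz : IsReduced (y :: z :: t) := h.infix (List.suffix_cons x _).isInfix
    have hxyz : IsReduced [x, y, z] := h.infix (List.prefix_append [x, y, z] t).isInfix
    obtain ⟨ih1, ih2⟩ := ih y z hyz
    have h1 := hf.gromovProd_add_lt x y z hxyz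
    have hG : f (mk (y :: z :: t)) = f (mk [y]) * f (mk (z :: t)) := by
      rw [mk_cons, _root_.map_mul]
    have h2 := norm_mul (f (mk [y])) (f (mk (z :: t)))
    have h3 := norm_inv_mul (f (mk [y])) (f (mk (y :: z :: t)))
    rw [hG, inv_mul_cancel_left] at h3
    rw [hG]
    have h4 := min_gromovProd_le (f (mk [x]))⁻¹ (f (mk [y])) (f (mk [y]) * f (mk (z :: t)))
    have h5 := min_gromovProd_le (f (mk [x]))⁻¹ (f (mk [y]) * f (mk (z :: t))) (f (mk [y]))
    rw [gromovProd_comm _ (f (mk [y]))] at h5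
    simp only [List.length_cons]
    omega

theorem length_le_norm (hf : IsNielsenReduced f) {L : List (β × Bool)} (h : IsReduced L) :
    L.length ≤ norm (f (mk L)) := by
  match L, h with
  | [], _ => simp
  | [x], _ => exact norm_pos_of_ne_one (hf.ne_one x)
  | x :: y :: t, h =>
    have hxy : IsReduced [x, y] := h.infix (List.prefix_append [x, y] t).isInfix
    obtain ⟨h1, h2⟩ := hf.gromovProd_map_cons x y t h
    have h3 := norm_mul (f (mk [x])) (f (mk (y :: t)))
    rw [← _root_.map_mul, ← mk_cons] at h3
    have h4 := (hf.two_mul_gromovProd_le x y hxy).1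
    have h5 := norm_pos_of_ne_one (hf.ne_one x)
    simp only [List.length_cons]
    omega

end IsNielsenReduced

end FreeGroup

/-- The pairs obtained from `(a, b)` by elementary Nielsen moves and simultaneous conjugation. -/
inductive NielsenReachable : F2 → F2 → Prop
  | base : NielsenReachable ga gb
  | swap {u v : F2} : NielsenReachable u v → NielsenReachable v u
  | inv {u v : F2} : NielsenReachable u v → NielsenReachable u⁻¹ v
  | mul {u v : F2} : NielsenReachable u v → NielsenReachable (u * v) v
  | conj {u v : F2} (h : F2) : NielsenReachable u v →
      NielsenReachable (h * u * h⁻¹) (h * v * h⁻¹)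

theorem NielsenReachable.of_mul {u v : F2} (h : NielsenReachable (u * v) v) :
    NielsenReachable u v := by
  simpa using h.swap.inv.swap.mul.swap.inv.swap

/-- `u` and `v` generate `F₂` but `(u, v)` is not reachable from `(a, b)` by Nielsen moves. -/
def IsUnreachableGenPair (u v : F2) : Prop :=
  (∀ H : Subgroup F2, u ∈ H → v ∈ H → H = ⊤) ∧ ¬ NielsenReachable u v

namespace IsUnreachableGenPair

variable {u v : F2}

theorem swap (h : IsUnreachableGenPair u v) : IsUnreachableGenPair v u :=
  ⟨fun H hv hu => h.1 H hu hv, fun hr => h.2 hr.swap⟩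

theorem inv (h : IsUnreachableGenPair u v) : IsUnreachableGenPair u⁻¹ v :=
  ⟨fun H hu hv => h.1 H (H.inv_mem_iff.1 hu) hv, fun hr => h.2 (by simpa using hr.inv)⟩

theorem mul (h : IsUnreachableGenPair u v) : IsUnreachableGenPair (u * v) v :=
  ⟨fun H huv hv => h.1 H ((H.mul_mem_cancel_right hv).1 huv) hv, fun hr => h.2 hr.of_mul⟩

theorem conj (h : IsUnreachableGenPair u v) (g : F2) :
    IsUnreachableGenPair (g * u * g⁻¹) (g * v * g⁻¹) := by
  refine ⟨fun H hu hv => ?_, fun hr => h.2 ?_⟩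
  · have h1 := h.1 (H.comap (MulAut.conj g).toMonoidHom) (by simpa using hu) (by simpa using hv)
    rw [eq_top_iff]
    intro x _
    have h2 : g⁻¹ * x * g ∈ H.comap (MulAut.conj g).toMonoidHom := h1 ▸ Subgroup.mem_top _
    simpa [mul_assoc] using h2
  · simpa [mul_assoc] using hr.conj g⁻¹

theorem ne_one (h : IsUnreachableGenPair u v) : u ≠ 1 := by
  rintro rfl
  have h1 := h.1 (Subgroup.zpowers v) (one_mem _) (Subgroup.mem_zpowers v)
  obtain ⟨m, hm⟩ := Subgroup.mem_zpowers_iff.1 (h1 ▸ Subgroup.mem_top ga)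
  obtain ⟨n, hn⟩ := Subgroup.mem_zpowers_iff.1 (h1 ▸ Subgroup.mem_top gb)
  have h2 : ga * gb = gb * ga := by
    rw [← hm, ← hn, ← zpow_add, ← zpow_add, add_comm]
  exact absurd h2 (by decide)

end IsUnreachableGenPair

/-- A pair of minimal total length among the unreachable generating pairs. -/
def IsMinimalUnreachable (u v : F2) : Prop :=
  IsUnreachableGenPair u v ∧
    ∀ u' v', IsUnreachableGenPair u' v' → norm u + norm v ≤ norm u' + norm v'

namespace IsMinimalUnreachable

variable {u v : F2}

theorem swap (h : IsMinimalUnreachable u v) : IsMinimalUnreachable v u :=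
  ⟨h.1.swap, fun u' v' h' => by rw [add_comm]; exact h.2 u' v' h'⟩

theorem inv (h : IsMinimalUnreachable u v) : IsMinimalUnreachable u⁻¹ v :=
  ⟨h.1.inv, fun u' v' h' => by rw [norm_inv_eq]; exact h.2 u' v' h'⟩

theorem norm_left_le (h : IsMinimalUnreachable u v) : norm u ≤ norm (u * v) := by
  have := h.2 _ _ h.1.mul
  omega

theorem norm_right_le (h : IsMinimalUnreachable u v) : norm v ≤ norm (u * v) := by
  have := h.inv.swap.inv.norm_left_le
  rwa [← mul_inv_rev, norm_inv_eq, norm_inv_eq] at this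

theorem two_mul_gromovProd_le (h : IsMinimalUnreachable u v) :
    2 * gromovProd u⁻¹ v ≤ norm u ∧ 2 * gromovProd u⁻¹ v ≤ norm v := by
  have h1 := h.norm_left_le
  have h2 := h.norm_right_le
  have h3 := norm_mul u v
  omega

/-- If both halves of `v` cancelled in `u * v * u`, then `u = q * m * p⁻¹` and `v = p * q⁻¹`, so that
`(u * v, v)` would be conjugate to the shorter pair `(m, q⁻¹ * p)`. -/
theorem gromovProd_add_lt (h : IsMinimalUnreachable u v) :
    gromovProd u⁻¹ v + gromovProd v⁻¹ u < norm v := by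
  have h1 := h.two_mul_gromovProd_le
  have h2 := h.swap.two_mul_gromovProd_le
  by_contra! hge
  obtain ⟨q, s₁, t₁, hv₁, hu₁, hq, -⟩ := exists_toWord_inv_mul v⁻¹ u
  obtain ⟨p, s₂, t₂, hu₂, hv₂, hp, -⟩ := exists_toWord_inv_mul u⁻¹ v
  rw [toWord_inv] at hv₁ hu₂
  replace hv₁ : v.toWord = invRev s₁ ++ invRev q := by
    rw [← invRev_append, ← hv₁, invRev_invRev]
  replace hu₂ : u.toWord = invRev s₂ ++ invRev p := by
    rw [← invRev_append, ← hu₂, invRev_invRev]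
  have hlv : norm v = s₁.length + q.length := by simp [FreeGroup.norm, hv₁]
  have hlu : norm u = s₂.length + p.length := by simp [FreeGroup.norm, hu₂]
  obtain ⟨rfl, rfl⟩ := List.append_inj (hv₂.symm.trans hv₁) (by simp; omega)
  obtain ⟨m, hm⟩ : q <+: invRev s₂ := by
    refine List.prefix_of_prefix_length_le (l₃ := u.toWord) ?_ ?_ ?_
    · exact hu₁ ▸ List.prefix_append _ _
    · exact hu₂ ▸ List.prefix_append _ _
    · simp at hlu hp ⊢
      omega
  have hlm : q.length + m.length = s₂.length := by
    rw [← List.length_append, hm, invRev_length]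
  have hu : u = mk q * mk m * mk s₁ := by
    rw [← mk_toWord (x := u), hu₂, ← hm, invRev_invRev, mul_mk, mul_mk]
  have hv : v = (mk s₁)⁻¹ * (mk q)⁻¹ := by
    rw [← mk_toWord (x := v), hv₁, inv_mk, inv_mk, mul_mk]
  have h3 := h.2 _ _ (h.1.mul.conj (mk q)⁻¹)
  have h4 : (mk q)⁻¹ * (u * v) * (mk q)⁻¹⁻¹ = mk m := by rw [hu, hv]; group
  have h5 : (mk q)⁻¹ * v * (mk q)⁻¹⁻¹ = (mk q)⁻¹ * (mk s₁)⁻¹ := by rw [hv]; group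
  rw [h4, h5, ← mul_inv_rev, norm_inv_eq, mul_mk] at h3
  have h6 := norm_mk_le (L₁ := m)
  have h7 := norm_mk_le (L₁ := s₁ ++ q)
  have h8 := norm_pos_of_ne_one h.1.swap.ne_one
  simp at h7 hlu
  omega

theorem gromovProd_inv_add_lt (h : IsMinimalUnreachable u v) :
    gromovProd u⁻¹ v + gromovProd v⁻¹ u⁻¹ < norm v := by
  have h1 := h.two_mul_gromovProd_le.2
  have h2 := h.swap.two_mul_gromovProd_le
  have h3 := min_gromovProd_le v u⁻¹ v⁻¹
  have h4 := norm_lt_norm_mul_self h.1.swap.ne_one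
  have h5 := norm_mul v v
  have h6 := h.inv.swap.two_mul_gromovProd_le.1
  rw [gromovProd_comm v u⁻¹, gromovProd_comm u⁻¹ v⁻¹, gromovProd_comm v v⁻¹] at h3
  omega

theorem lift_mk_singleton (u v : F2) (x : Fin 2 × Bool) :
    lift ![u, v] (mk [x]) = if x.2 then ![u, v] x.1 else (![u, v] x.1)⁻¹ := by
  rcases x with ⟨i, _ | _⟩ <;> simp [lift_mk]

theorem lift_mk_not (u v : F2) (i : Fin 2) (e : Bool) :
    lift ![u, v] (mk [(i, !e)]) = (lift ![u, v] (mk [(i, e)]))⁻¹ := by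
  cases e <;> simp

theorem map_letters (h : IsMinimalUnreachable u v) {x y : Fin 2 × Bool} (hxy : x.1 ≠ y.1) :
    IsMinimalUnreachable (lift ![u, v] (mk [x])) (lift ![u, v] (mk [y])) := by
  have key : ∀ u v e e', IsMinimalUnreachable u v → IsMinimalUnreachable
      (if e = true then u else u⁻¹) (if e' = true then v else v⁻¹) := by
    intro u v e e' h
    cases e <;> cases e' <;> simp [h, h.inv, h.swap.inv.swap, h.inv.swap.inv.swap]
  rw [lift_mk_singleton, lift_mk_singleton]
  rcases x with ⟨i, e⟩
  rcases y with ⟨j, e'⟩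
  fin_cases i <;> fin_cases j
  · exact absurd rfl hxy
  · exact key u v e e' h
  · exact key v u e e' h.swap
  · exact absurd rfl hxy

theorem isNielsenReduced (h : IsMinimalUnreachable u v) : IsNielsenReduced (lift ![u, v]) := by
  have hne : ∀ x, lift ![u, v] (mk [x]) ≠ 1 := by
    rintro ⟨i, e⟩
    exact (h.map_letters (x := (i, e)) (y := (i + 1, e))
      (by simp)).1.ne_one
  have hself : ∀ x, 2 * gromovProd (lift ![u, v] (mk [x]))⁻¹ (lift ![u, v] (mk [x])) <
      norm (lift ![u, v] (mk [x])) := by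
    intro x
    have h1 := norm_lt_norm_mul_self (hne x)
    have h2 := norm_mul (lift ![u, v] (mk [x])) (lift ![u, v] (mk [x]))
    omega
  have hle : ∀ x y, IsReduced [x, y] →
      2 * gromovProd (lift ![u, v] (mk [x]))⁻¹ (lift ![u, v] (mk [y])) ≤
        norm (lift ![u, v] (mk [x])) ∧
      2 * gromovProd (lift ![u, v] (mk [x]))⁻¹ (lift ![u, v] (mk [y])) ≤
        norm (lift ![u, v] (mk [y])) := by
    intro x y hxy
    by_cases h1 : x.1 = y.1
    · obtain rfl : x = y := Prod.ext h1 (by simpa [h1] using hxy)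
      exact ⟨(hself x).le, (hself x).le⟩
    · exact (h.map_letters h1).two_mul_gromovProd_le
  refine ⟨hne, hle, fun x y z hxyz => ?_⟩
  have hxy : IsReduced [x, y] := hxyz.infix (List.prefix_append [x, y] [z]).isInfix
  have hyz : IsReduced [y, z] := hxyz.infix (List.suffix_cons x _).isInfix
  have h1 := (hle x y hxy).2
  have h2 := (hle y z hyz).1
  by_cases hx : x.1 = y.1
  · obtain rfl : x = y := Prod.ext hx (by simpa [hx] using hxy)
    have := hself x
    omega
  by_cases hz : y.1 = z.1
  · obtain rfl : y = z := Prod.ext hz (by simpa [hz] using hyz)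
    have := hself y
    omega
  have hxz : z = x ∨ z = (x.1, !x.2) := by
    rcases x with ⟨i, e⟩
    rcases y with ⟨j, e'⟩
    rcases z with ⟨k, e''⟩
    revert hx hz
    clear * -
    revert i e j e' k e''
    decide
  rcases hxz with rfl | rfl
  · exact (h.map_letters hx).gromovProd_add_lt
  · rw [lift_mk_not u v x.1 x.2]
    exact (h.map_letters hx).gromovProd_inv_add_lt

theorem exists_letter (h : IsMinimalUnreachable u v) (i : Fin 2) :
    ∃ x, lift ![u, v] (mk [x]) = of i := by
  have hr : (lift ![u, v]).range = ⊤ :=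
    h.1.1 _ ⟨of 0, by simp⟩ ⟨of 1, by simp⟩
  obtain ⟨g, hg⟩ : of i ∈ (lift ![u, v]).range := hr ▸ Subgroup.mem_top _
  have h1 := h.isNielsenReduced.length_le_norm (isReduced_toWord (x := g))
  rw [mk_toWord, hg, norm_of] at h1
  rw [← mk_toWord (x := g)] at hg
  match hw : g.toWord, h1 with
  | [], _ => simp [hw, ← one_eq_mk] at hg
  | [x], _ => exact ⟨x, by rw [← hg, hw]⟩

end IsMinimalUnreachable

theorem not_isMinimalUnreachable (u v : F2) : ¬ IsMinimalUnreachable u v := by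
  intro h
  obtain ⟨x, hx⟩ := h.exists_letter 0
  obtain ⟨y, hy⟩ := h.exists_letter 1
  have hxy : x.1 ≠ y.1 := by
    intro hxy
    have h1 : x = y ∨ x = (y.1, !y.2) := by
      rcases x with ⟨i, e⟩
      rcases y with ⟨j, e'⟩
      cases e <;> cases e' <;> simp_all
    rcases h1 with rfl | rfl
    · exact absurd (hx.symm.trans hy) (by decide)
    · rw [IsMinimalUnreachable.lift_mk_not, hy] at hx
      exact absurd hx (by decide)
  have h1 := h.map_letters hxy
  rw [hx, hy] at h1
  exact h1.1.2 .base

/-- Every generating pair of `F₂` is obtained from `(a, b)` by Nielsen moves and conjugation. -/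
theorem nielsenReachable_of_generates {u v : F2}
    (h : ∀ H : Subgroup F2, u ∈ H → v ∈ H → H = ⊤) : NielsenReachable u v := by
  classical
  by_contra hr
  have hex : ∃ n u v, IsUnreachableGenPair u v ∧ norm u + norm v = n := ⟨_, u, v, ⟨h, hr⟩, rfl⟩
  obtain ⟨u', v', h', hn⟩ := Nat.find_spec hex
  exact not_isMinimalUnreachable u' v'
    ⟨h', fun u'' v'' h'' => hn ▸ Nat.find_min' hex ⟨u'', v'', h'', rfl⟩⟩

/-- The pairs obtained from the letters `a ^ ±1`, `b ^ ±1` of signs `α`, `β` by positive moves. -/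
inductive PositivePair (α β : Bool) : F2 → F2 → Prop
  | base : PositivePair α β (mk [(0, α)]) (mk [(1, β)])
  | swap {p q : F2} : PositivePair α β p q → PositivePair α β q p
  | mul {p q : F2} : PositivePair α β p q → PositivePair α β (p * q) q

/-- Up to inversion of each entry and simultaneous conjugation, `(u, v)` is a positive pair. -/
def IsSignedPositive (u v : F2) : Prop :=
  ∃ α β p q h, PositivePair α β p q ∧ (h * u * h⁻¹ = p ∨ h * u * h⁻¹ = p⁻¹) ∧
    (h * v * h⁻¹ = q ∨ h * v * h⁻¹ = q⁻¹)

namespace IsSignedPositive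

variable {u v : F2}

theorem swap : IsSignedPositive u v → IsSignedPositive v u := fun ⟨α, β, p, q, h, hp, hu, hv⟩ =>
  ⟨α, β, q, p, h, hp.swap, hv, hu⟩

theorem inv : IsSignedPositive u v → IsSignedPositive u⁻¹ v := fun ⟨α, β, p, q, h, hp, hu, hv⟩ =>
  ⟨α, β, p, q, h, hp, by
    rw [← conj_inv, inv_inj, inv_eq_iff_eq_inv]
    exact hu.symm, hv⟩

theorem conj (g : F2) : IsSignedPositive u v → IsSignedPositive (g * u * g⁻¹) (g * v * g⁻¹) :=
  fun ⟨α, β, p, q, h, hp, hu, hv⟩ => ⟨α, β, p, q, h * g⁻¹, hp, by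
    simpa [mul_assoc] using hu, by simpa [mul_assoc] using hv⟩

theorem of_conj (g : F2) (h : IsSignedPositive (g * u * g⁻¹) (g * v * g⁻¹)) :
    IsSignedPositive u v := by
  simpa [mul_assoc] using h.conj g⁻¹

theorem of_inv (h : IsSignedPositive u⁻¹ v) : IsSignedPositive u v := by
  simpa using h.inv

end IsSignedPositive

namespace PositivePair

variable {α β : Bool} {p q : F2}

theorem isSignedPositive (h : PositivePair α β p q) : IsSignedPositive p q :=
  ⟨α, β, p, q, 1, h, by simp, by simp⟩

theorem div (h : PositivePair α β p q) :
    IsSignedPositive (p * q⁻¹) q ∧ IsSignedPositive (q * p⁻¹) p := by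
  induction h with
  | base =>
    have h1 : ∀ (i : Fin 2) (e : Bool), (mk [(i, e)])⁻¹ = mk [(i, !e)] := fun i e => rfl
    constructor
    · have := (PositivePair.base (α := α) (β := !β)).mul.isSignedPositive
      rw [← h1] at this
      exact this.swap.of_inv.swap
    · have := (PositivePair.base (α := !α) (β := β)).swap.mul.isSignedPositive
      rw [← h1] at this
      exact this.swap.of_inv.swap
  | swap _ ih => exact ih.symm
  | @mul p q h ih =>
    refine ⟨by simpa using h.isSignedPositive, ?_⟩
    rw [mul_inv_rev, mul_inv_cancel_left]
    refine .inv (.of_conj p⁻¹ ?_)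
    simpa [mul_assoc] using h.swap.mul.swap.isSignedPositive

theorem isSignedPositive_mul (h : PositivePair α β p q) :
    IsSignedPositive (p * q) q ∧ IsSignedPositive (p * q⁻¹) q ∧
      IsSignedPositive (p⁻¹ * q) q ∧ IsSignedPositive (p⁻¹ * q⁻¹) q := by
  refine ⟨h.mul.isSignedPositive, h.div.1, .of_inv (.of_conj q ?_), .of_inv (.of_conj q⁻¹ ?_)⟩
  · have := h.div.1
    simpa [mul_assoc] using this
  · have := h.mul.isSignedPositive
    simpa [mul_assoc] using this

end PositivePair

theorem NielsenReachable.isSignedPositive {u v : F2} (h : NielsenReachable u v) :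
    IsSignedPositive u v := by
  induction h with
  | base => exact (PositivePair.base (α := true) (β := true)).isSignedPositive
  | swap _ ih => exact ih.swap
  | inv _ ih => exact ih.inv
  | conj g _ ih => exact ih.conj g
  | @mul u v _ ih =>
    obtain ⟨α, β, p, q, g, hp, hu, hv⟩ := ih
    obtain ⟨h1, h2, h3, h4⟩ := hp.isSignedPositive_mul
    refine .of_conj g ?_
    rw [← conj_mul]
    rcases hu with hu | hu <;> rcases hv with hv | hv <;> rw [hu, hv]
    · exact h1
    · exact h2.swap.inv.swap
    · exact h3
    · exact h4.swap.inv.swap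

/-- The elements represented by positive words in two letters `x`, `y` in which every `x` is followed
by a `y`. -/
def isolatedSubmonoid (x y : Fin 2 × Bool) : Submonoid F2 :=
  Submonoid.closure {mk [x] * mk [y], mk [y]}

theorem repeatCount_eq_zero_of_mem {x y : Fin 2 × Bool} (hxy : x.1 ≠ y.1) {g : F2}
    (hg : g ∈ isolatedSubmonoid x y) : repeatCount x.1 g.toWord = 0 := by
  suffices h : ∃ L : List (Fin 2 × Bool), g = mk L ∧ (∀ z ∈ L.head?, z = x ∨ z = y) ∧
      IsReduced L ∧ repeatCount x.1 L = 0 by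
    obtain ⟨L, rfl, -, hL, h0⟩ := h
    rwa [toWord_mk, hL.reduce_eq]
  have hcons : ∀ L : List (Fin 2 × Bool), (∀ z ∈ L.head?, z = x ∨ z = y) → IsReduced L →
      repeatCount x.1 L = 0 → IsReduced (y :: L) ∧ repeatCount x.1 (y :: L) = 0 := by
    intro L h1 h2 h3
    match L with
    | [] => simp [repeatCount]
    | z :: L =>
      rw [isReduced_cons_cons, repeatCount, h3]
      rcases h1 z rfl with rfl | rfl <;> simp [h2, hxy.symm]
  induction hg using Submonoid.closure_induction_left with
  | one => exact ⟨[], by simp [← one_eq_mk, repeatCount]⟩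
  | mul_left s hs g _ ih =>
    obtain ⟨L, rfl, h1, h2, h3⟩ := ih
    obtain ⟨h4, h5⟩ := hcons L h1 h2 h3
    rcases hs with rfl | rfl
    · refine ⟨x :: y :: L, by simp [mul_mk], by simp, isReduced_cons_cons.2 ⟨?_, h4⟩, ?_⟩
      · exact fun h => absurd h hxy
      · rw [repeatCount, h5, if_neg fun h => hxy (congrArg Prod.fst h.1)]
    · exact ⟨y :: L, by simp [mul_mk], by simp, h4, h5⟩

theorem PositivePair.base_or_mem_isolatedSubmonoid {α β : Bool} {p q : F2}
    (h : PositivePair α β p q) :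
    (p = mk [(0, α)] ∧ q = mk [(1, β)] ∨ p = mk [(1, β)] ∧ q = mk [(0, α)]) ∨
      (p ∈ isolatedSubmonoid (0, α) (1, β) ∧ q ∈ isolatedSubmonoid (0, α) (1, β)) ∨
      (p ∈ isolatedSubmonoid (1, β) (0, α) ∧ q ∈ isolatedSubmonoid (1, β) (0, α)) := by
  have hmem : ∀ x y, mk [x] * mk [y] ∈ isolatedSubmonoid x y ∧
      mk [y] ∈ isolatedSubmonoid x y := fun x y =>
    ⟨Submonoid.subset_closure (by simp), Submonoid.subset_closure (by simp)⟩
  induction h with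
  | base => exact .inl (.inl ⟨rfl, rfl⟩)
  | swap _ ih => tauto
  | mul _ ih =>
    rcases ih with (⟨rfl, rfl⟩ | ⟨rfl, rfl⟩) | ⟨h1, h2⟩ | ⟨h1, h2⟩
    · exact .inr (.inl (hmem _ _))
    · exact .inr (.inr (hmem _ _))
    · exact .inr (.inl ⟨mul_mem h1 h2, h2⟩)
    · exact .inr (.inr ⟨mul_mem h1 h2, h2⟩)

theorem PositivePair.exists_repeatCount_eq_zero {α β : Bool} {p q : F2}
    (h : PositivePair α β p q) :
    ∃ i : Fin 2, repeatCount i p.toWord = 0 ∧ repeatCount i q.toWord = 0 := by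
  rcases h.base_or_mem_isolatedSubmonoid with (⟨rfl, rfl⟩ | ⟨rfl, rfl⟩) | ⟨h1, h2⟩ | ⟨h1, h2⟩
  · exact ⟨0, by simp [toWord_mk, repeatCount]⟩
  · exact ⟨0, by simp [toWord_mk, repeatCount]⟩
  · exact ⟨0, repeatCount_eq_zero_of_mem (by simp) h1, repeatCount_eq_zero_of_mem (by simp) h2⟩
  · exact ⟨1, repeatCount_eq_zero_of_mem (by simp) h1, repeatCount_eq_zero_of_mem (by simp) h2⟩

/-- Up to conjugation, an automorphism of `F₂` sends `a` and `b` to words in which one of the two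
letters is never repeated. -/
theorem exists_conj_repeatCount_eq_zero (φ : F2 ≃* F2) :
    ∃ (i : Fin 2) (g : F2), ∀ x, repeatCount i (g * φ (of x) * g⁻¹).toWord = 0 := by
  have hgen : ∀ H : Subgroup F2, φ (of 0) ∈ H → φ (of 1) ∈ H → H = ⊤ := by
    intro H h0 h1
    have h2 : H.comap φ.toMonoidHom = ⊤ := by
      rw [eq_top_iff, ← closure_range_of, Subgroup.closure_le]
      rintro _ ⟨i, rfl⟩
      fin_cases i
      · exact h0
      · exact h1
    rw [eq_top_iff]
    intro x _
    have h3 : φ.symm x ∈ H.comap φ.toMonoidHom := h2 ▸ Subgroup.mem_top _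
    simpa using h3
  obtain ⟨α, β, p, q, g, hpq, hp, hq⟩ := (nielsenReachable_of_generates hgen).isSignedPositive
  obtain ⟨i, hi, hi'⟩ := hpq.exists_repeatCount_eq_zero
  refine ⟨i, g, Fin.forall_fin_two.2 ⟨?_, ?_⟩⟩
  · rcases hp with h | h <;> rw [h] <;> simpa only [repeatCount_toWord_inv] using hi
  · rcases hq with h | h <;> rw [h] <;> simpa only [repeatCount_toWord_inv] using hi'

theorem CyclicallyReduced.isCyclicallyReduced {c : F2} (h : CyclicallyReduced c.toWord) :
    IsCyclicallyReduced c.toWord := by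
  refine ⟨isReduced_toWord, fun a ha b hb hab => ?_⟩
  have h1 := h b hb a ha
  by_contra hne
  exact h1 (Prod.ext hab (Bool.eq_not_of_ne hne))

theorem HasBlock.le_repeatCount {i : Fin 2} {k : ℕ} {c : F2} (h : HasBlock i (k + 1) c) :
    k ≤ repeatCount i c.toWord := by
  rcases h with h | h <;>
    exact (repeatCount_replicate i _ k).symm.le.trans (repeatCount_le_of_infix i h)

/-- If a cyclically reduced `w` of length at least 1 contains, as a cyclic word
(i.e. in some cyclically reduced conjugate), a block of `a`'s and a block of `b`'s
each of absolute exponent at least `|w'| + 2`, then `w` is not an automorphic image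
of `w'`. -/
theorem blocking_subword_certifies_not_in_orbit (w w' : F2)
    (hcr : CyclicallyReduced w.toWord) (hlen : 1 ≤ w.toWord.length)
    (ha : ∃ c h : F2, w = h * c * h⁻¹ ∧ CyclicallyReduced c.toWord ∧
      HasBlock 0 (w'.toWord.length + 2) c)
    (hb : ∃ c h : F2, w = h * c * h⁻¹ ∧ CyclicallyReduced c.toWord ∧
      HasBlock 1 (w'.toWord.length + 2) c) :
    ¬ ∃ φ : F2 ≃* F2, φ w' = w := by
  rintro ⟨φ, rfl⟩
  obtain ⟨i, g, hi⟩ := exists_conj_repeatCount_eq_zero φ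
  obtain ⟨c, h, hw, hc, hblock⟩ : ∃ c h : F2, φ w' = h * c * h⁻¹ ∧
      CyclicallyReduced c.toWord ∧ HasBlock i (w'.toWord.length + 2) c := by
    fin_cases i
    · exact ha
    · exact hb
  have h1 := repeatCount_le_norm_of_conj i ((MulAut.conj g).toMonoidHom.comp φ.toMonoidHom)
    (by simpa using hi) w' c (g * h) hc.isCyclicallyReduced (by simp [hw, mul_assoc])
  have h2 := hblock.le_repeatCount
  rw [FreeGroup.norm] at h1
  omega
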